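/- arXiv:math-ph/0412009 — 2 statements merged into one kernel-verified Lean document; each statement's English description precedes it below -/
import Mathlib

section
/- Quantum mutual information bounds classical mutual information (Corollary 5): Let ρ₁₂ be a density matrix on H₁⊗H₂, let P^1,…,P^M be positive semidefinite operators on H₁ with ∑_α P^α = id_{H₁}, and let Q^1,…,Q^N be positive semidefinite operators on H₂ with ∑_β Q^β = id_{H₂}. Define the classical entropies S^cl[ρ₁₂] = ∑_{α,β} φ( Tr[(P^α⊗Q^β) ρ₁₂] ), S^cl[ρ₁] = ∑_α φ( Tr[P^α ρ₁] ), and S^cl[ρ₂] = ∑_β φ( Tr[Q^β ρ₂] ), where φ(x) = −x ln x (with φ(0)=0). Then S[ρ₁] + S[ρ₂] − S[ρ₁₂] ≥ S^cl[ρ₁] + S^cl[ρ₂] − S^cl[ρ₁₂]. -/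
open Matrix Kronecker Real
open scoped ComplexOrder

/-- Von Neumann entropy of a (Hermitian) matrix: the sum of `-λ ln λ` over its
eigenvalues, with the convention `0 ln 0 = 0`. -/
noncomputable def entropy {n : Type*} [Fintype n] [DecidableEq n]
    (A : Matrix n n ℂ) : ℝ :=
  if h : A.IsHermitian then ∑ i, Real.negMulLog (h.eigenvalues i) else 0

/-- Partial trace over the first factor of a twofold tensor product. -/
noncomputable def ptraceFst {m k : Type*} [Fintype m]
    (ρ : Matrix (m × k) (m × k) ℂ) : Matrix k k ℂ :=
  Matrix.of fun i j => ∑ a : m, ρ (a, i) (a, j)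

/-- Partial trace over the second factor of a twofold tensor product. -/
noncomputable def ptraceSnd {m k : Type*} [Fintype k]
    (ρ : Matrix (m × k) (m × k) ℂ) : Matrix m m ℂ :=
  Matrix.of fun i j => ∑ a : k, ρ (i, a) (j, a)

/-- Partial trace over the first factor of a threefold tensor product
(indexed as `(H₁ ⊗ H₂) ⊗ H₃`). -/
noncomputable def ptraceFst₃ {a b c : Type*} [Fintype a]
    (ρ : Matrix ((a × b) × c) ((a × b) × c) ℂ) : Matrix (b × c) (b × c) ℂ :=
  Matrix.of fun p q => ∑ i : a, ρ ((i, p.1), p.2) ((i, q.1), q.2)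

/-! Both mutual informations are relative entropies between `ρ` and `ρ₁ ⊗ ρ₂`, the quantum one
before and the classical one after the product measurement `P ⊗ Q`, so the inequality is the
monotonicity of relative entropy under a measurement.

For the latter, a classical relative entropy `∑ p (log p - log q)` is obtained by integrating
`∑ p² / (q + t p)` over `t > 0`, and it suffices to compare these rational divergences for each `t`.
The quantum relative entropy is itself a classical one, between the weights `r i * Tr (E i * F j)`
and `s j * Tr (E i * F j)` built from spectral resolutions `ρ = ∑ r i • E i` and `σ = ∑ s j • F j`.
Completing the square shows that their rational divergence dominates
`2 Tr (ρ X) - Tr (σ X²) - t Tr (ρ X²)` for every Hermitian `X`; choosing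
`X = ∑ (p k / (q k + t * p k)) • G k` and using `Tr (ρ X²) ≤ ∑ c k ^ 2 * Tr (G k * ρ)`
for `X = ∑ c k • G k` recovers the rational divergence of the measured distributions. -/

section Classical

open Filter Topology

variable {ι κ α β : Type*}

/-- The relative entropy (Kullback–Leibler divergence) of finite real weights `p` and `q`. As
`Real.log 0 = 0`, it is the usual one only if `p` vanishes wherever `q` does; otherwise the usual
value is infinite. -/
noncomputable def relEntropy [Fintype ι] (p q : ι → ℝ) : ℝ :=
  ∑ i, p i * (log (p i) - log (q i))

lemma hasDerivAt_mul_log_add_mul {p q t : ℝ} (hp : 0 ≤ p) (hq : 0 ≤ q) (hpq : q = 0 → p = 0)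
    (ht : 0 ≤ t) : HasDerivAt (fun t ↦ p * log (q + t * p)) (p ^ 2 / (q + t * p)) t := by
  rcases hq.eq_or_lt' with hq | hq
  · simpa [hpq hq] using hasDerivAt_const t (0 : ℝ)
  · have hpos : q + t * p ≠ 0 := by positivity
    refine (((((hasDerivAt_id' t).mul_const p).const_add q).log hpos).const_mul p).congr_deriv ?_
    ring

lemma tendsto_mul_log_add_mul_sub {p q : ℝ} (hp : 0 ≤ p) (hq : 0 ≤ q) :
    Tendsto (fun t ↦ p * log (q + t * p) - p * log t) atTop (𝓝 (p * log p)) := by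
  rcases hp.eq_or_lt' with rfl | hp
  · simp
  · have hlim : Tendsto (fun t ↦ p * log (q / t + p)) atTop (𝓝 (p * log (0 + p))) :=
      (((tendsto_const_nhds.div_atTop tendsto_id).add_const p).log
        (by simpa using hp.ne')).const_mul p
    rw [zero_add] at hlim
    refine hlim.congr' ?_
    filter_upwards [eventually_gt_atTop 0] with t ht
    rw [← mul_sub, ← log_div (by positivity) ht.ne']
    congr 2
    field_simp

variable [Fintype ι] [Fintype κ] {p q : κ → ℝ} {P Q : ι → ℝ}

lemma eq_zero_of_sum_sq_div_le (hp : ∀ k, 0 ≤ p k) (hq : ∀ k, 0 ≤ q k) (hP : ∀ i, 0 ≤ P i)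
    (hQ : ∀ i, 0 ≤ Q i) (hPQ : ∀ i, Q i = 0 → P i = 0)
    (h : ∀ t : ℝ, 0 < t → ∑ k, p k ^ 2 / (q k + t * p k) ≤ ∑ i, P i ^ 2 / (Q i + t * P i))
    {k : κ} (hk : q k = 0) : p k = 0 := by
  have hbound (t : ℝ) (ht : 0 < t) : p k ≤ (∑ i, P i ^ 2 / Q i) * t := by
    have hterm : p k ^ 2 / (q k + t * p k) ≤ ∑ k, p k ^ 2 / (q k + t * p k) :=
      Finset.single_le_sum (f := fun k ↦ p k ^ 2 / (q k + t * p k))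
        (fun k _ ↦ div_nonneg (sq_nonneg _) (add_nonneg (hq k) (mul_nonneg ht.le (hp k))))
        (Finset.mem_univ k)
    have hmono : ∑ i, P i ^ 2 / (Q i + t * P i) ≤ ∑ i, P i ^ 2 / Q i := by
      refine Finset.sum_le_sum fun i _ ↦ ?_
      rcases (hQ i).eq_or_lt' with hi | hi
      · simp [hPQ i hi]
      · exact div_le_div_of_nonneg_left (sq_nonneg _) hi
          (le_add_of_nonneg_right (mul_nonneg ht.le (hP i)))
    have hdiv : p k ^ 2 / (q k + t * p k) = p k / t := by
      rw [hk, zero_add]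
      by_cases hpk : p k = 0
      · simp [hpk]
      · field_simp
    rw [← div_le_iff₀ ht, ← hdiv]
    exact hterm.trans ((h t ht).trans hmono)
  have hlim : Tendsto (fun t ↦ (∑ i, P i ^ 2 / Q i) * t) (𝓝[>] 0) (𝓝 0) :=
    ((continuous_const_mul _).tendsto' 0 0 (mul_zero _)).mono_left nhdsWithin_le_nhds
  exact le_antisymm (ge_of_tendsto hlim (eventually_mem_nhdsWithin.mono hbound)) (hp k)

lemma relEntropy_le_relEntropy_of_sum_sq_div_le (hp : ∀ k, 0 ≤ p k) (hq : ∀ k, 0 ≤ q k)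
    (hP : ∀ i, 0 ≤ P i) (hQ : ∀ i, 0 ≤ Q i) (hPQ : ∀ i, Q i = 0 → P i = 0)
    (hsum : ∑ k, p k = ∑ i, P i)
    (h : ∀ t : ℝ, 0 < t → ∑ k, p k ^ 2 / (q k + t * p k) ≤ ∑ i, P i ^ 2 / (Q i + t * P i)) :
    relEntropy p q ≤ relEntropy P Q := by
  have hpq (k : κ) : q k = 0 → p k = 0 := eq_zero_of_sum_sq_div_le hp hq hP hQ hPQ h
  set g : ℝ → ℝ := fun t ↦ ∑ i, P i * log (Q i + t * P i) - ∑ k, p k * log (q k + t * p k) with hg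
  have hderiv (t : ℝ) (ht : 0 ≤ t) : HasDerivAt g
      (∑ i, P i ^ 2 / (Q i + t * P i) - ∑ k, p k ^ 2 / (q k + t * p k)) t :=
    (HasDerivAt.fun_sum fun i _ ↦ hasDerivAt_mul_log_add_mul (hP i) (hQ i) (hPQ i) ht).sub
      (HasDerivAt.fun_sum fun k _ ↦ hasDerivAt_mul_log_add_mul (hp k) (hq k) (hpq k) ht)
  have hmono : MonotoneOn g (Set.Ici 0) := by
    refine monotoneOn_of_hasDerivWithinAt_nonneg (convex_Ici 0)
      (fun t ht ↦ (hderiv t ht).continuousAt.continuousWithinAt)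
      (fun t ht ↦ (hderiv t (interior_subset ht)).hasDerivWithinAt) fun t ht ↦ ?_
    rw [interior_Ici] at ht
    exact sub_nonneg.2 (h t ht)
  have hlim : Tendsto g atTop (𝓝 (∑ i, P i * log (P i) - ∑ k, p k * log (p k))) := by
    refine ((tendsto_finsetSum _ fun i _ ↦ tendsto_mul_log_add_mul_sub (hP i) (hQ i)).sub
      (tendsto_finsetSum _ fun k _ ↦ tendsto_mul_log_add_mul_sub (hp k) (hq k))).congr fun t ↦ ?_
    simp only [hg, Finset.sum_sub_distrib, ← Finset.sum_mul, hsum]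
    ring
  have hle : g 0 ≤ _ := ge_of_tendsto hlim <| (eventually_ge_atTop 0).mono fun t ht ↦
    hmono Set.self_mem_Ici ht ht
  simp only [hg, zero_mul, add_zero] at hle
  simp only [relEntropy, mul_sub, Finset.sum_sub_distrib]
  linarith

variable [Fintype α] [Fintype β]

lemma sum_mul_log_mul {d : α × β → ℝ} {x : α → ℝ} {y : β → ℝ}
    (hx : ∀ a b, x a = 0 → d (a, b) = 0) (hy : ∀ a b, y b = 0 → d (a, b) = 0) :
    ∑ c, d c * log (x c.1 * y c.2)
      = ∑ a, (∑ b, d (a, b)) * log (x a) + ∑ b, (∑ a, d (a, b)) * log (y b) := by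
  have hsplit (c : α × β) :
      d c * log (x c.1 * y c.2) = d c * log (x c.1) + d c * log (y c.2) := by
    by_cases hxc : x c.1 = 0
    · simp [hx c.1 c.2 hxc]
    by_cases hyc : y c.2 = 0
    · simp [hy c.1 c.2 hyc]
    rw [log_mul hxc hyc, mul_add]
  simp only [hsplit, Finset.sum_add_distrib, Finset.sum_mul]
  rw [Fintype.sum_prod_type, Fintype.sum_prod_type_right]

lemma relEntropy_mul_eq_sum_negMulLog {d : α × β → ℝ} {x : α → ℝ} {y : β → ℝ}
    (hd : ∀ c, 0 ≤ d c) (hx : ∀ a, ∑ b, d (a, b) = x a) (hy : ∀ b, ∑ a, d (a, b) = y b) :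
    relEntropy d (fun c ↦ x c.1 * y c.2)
      = ∑ a, negMulLog (x a) + ∑ b, negMulLog (y b) - ∑ a, ∑ b, negMulLog (d (a, b)) := by
  have hx₀ (a b) (ha : x a = 0) : d (a, b) = 0 :=
    congrFun ((Fintype.sum_eq_zero_iff_of_nonneg fun b ↦ hd (a, b)).1 ((hx a).trans ha)) b
  have hy₀ (a b) (hb : y b = 0) : d (a, b) = 0 :=
    congrFun ((Fintype.sum_eq_zero_iff_of_nonneg fun a ↦ hd (a, b)).1 ((hy b).trans hb)) a
  simp only [relEntropy, mul_sub, Finset.sum_sub_distrib, sum_mul_log_mul hx₀ hy₀, hx, hy,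
    negMulLog, neg_mul, Finset.sum_neg_distrib, Fintype.sum_prod_type]
  ring

end Classical

section Trace

variable {n : Type*} [Fintype n] {A B : Matrix n n ℂ}

open scoped MatrixOrder in
lemma trace_mul_re_nonneg (hA : A.PosSemidef) (hB : B.PosSemidef) : 0 ≤ (A * B).trace.re := by
  classical
  obtain ⟨C, rfl⟩ := CStarAlgebra.nonneg_iff_eq_star_mul_self.1 hA.nonneg
  rw [star_eq_conjTranspose, Matrix.mul_assoc, trace_mul_comm]
  exact (Complex.le_def.1 (hB.mul_mul_conjTranspose_same C).trace_nonneg).1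

lemma trace_mul_im_eq_zero (hA : A.IsHermitian) (hB : B.IsHermitian) : (A * B).trace.im = 0 := by
  rw [← Complex.conj_eq_iff_im, ← Complex.star_def, ← trace_conjTranspose, conjTranspose_mul, hA,
    hB, trace_mul_comm]

open scoped MatrixOrder in
lemma mul_eq_zero_of_trace_mul_re_eq_zero {F : Matrix n n ℂ} (hF : F.IsHermitian)
    (hF₂ : IsIdempotentElem F) (hA : A.PosSemidef) (h : (F * A).trace.re = 0) : A * F = 0 := by
  classical
  obtain ⟨C, rfl⟩ := CStarAlgebra.nonneg_iff_eq_star_mul_self.1 hA.nonneg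
  rw [star_eq_conjTranspose] at *
  have hCF : ((C * F)ᴴ * (C * F)).trace = 0 := by
    have : ((C * F)ᴴ * (C * F)).trace = (F * (Cᴴ * C)).trace := by
      rw [conjTranspose_mul, hF, ← Matrix.mul_assoc, trace_mul_comm]
      simp only [← Matrix.mul_assoc, hF₂.eq]
    exact this.trans (Complex.ext h (trace_mul_im_eq_zero hF hA.1))
  rw [Matrix.mul_assoc, trace_conjTranspose_mul_self_eq_zero_iff.1 hCF, Matrix.mul_zero]

end Trace

section POVM

variable {ι n : Type*}

/-- A positive operator-valued measure with finitely many outcomes. -/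
structure IsPOVM [Fintype ι] [DecidableEq n] (E : ι → Matrix n n ℂ) : Prop where
  posSemidef : ∀ i, (E i).PosSemidef
  sum_eq_one : ∑ i, E i = 1

/-- The outcome distribution of the measurement `E` in the state `ρ`, given by the Born rule. -/
noncomputable def bornProb [Fintype n] (E : ι → Matrix n n ℂ) (ρ : Matrix n n ℂ) (i : ι) : ℝ :=
  (E i * ρ).trace.re

variable [Fintype ι] {E : ι → Matrix n n ℂ}

lemma isHermitian_sum_smul (hE : ∀ i, (E i).IsHermitian) (c : ι → ℝ) :
    (∑ i, c i • E i).IsHermitian := by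
  simp [IsHermitian, conjTranspose_sum, conjTranspose_smul, (hE _).eq]

variable [Fintype n]

lemma trace_mul_sum_smul_re (ρ : Matrix n n ℂ) (c : ι → ℝ) (E : ι → Matrix n n ℂ) :
    (ρ * ∑ i, c i • E i).trace.re = ∑ i, c i * bornProb E ρ i := by
  simp [bornProb, Finset.mul_sum, trace_sum, trace_mul_comm ρ]

variable [DecidableEq n] {ρ : Matrix n n ℂ}

lemma IsPOVM.bornProb_nonneg (hE : IsPOVM E) (hρ : ρ.PosSemidef) (i : ι) : 0 ≤ bornProb E ρ i :=
  trace_mul_re_nonneg (hE.posSemidef i) hρ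

lemma IsPOVM.sum_bornProb (hE : IsPOVM E) (ρ : Matrix n n ℂ) :
    ∑ i, bornProb E ρ i = ρ.trace.re := by
  simp only [bornProb, ← Complex.re_sum, ← trace_sum, ← Finset.sum_mul, hE.sum_eq_one, one_mul]

/-- The operator Jensen inequality for the square function. -/
lemma IsPOVM.trace_mul_sum_smul_sq_le (hE : IsPOVM E) (hρ : ρ.PosSemidef) (c : ι → ℝ) :
    (ρ * (∑ i, c i • E i) ^ 2).trace.re ≤ ∑ i, c i ^ 2 * bornProb E ρ i := by
  set Y := ∑ i, c i • E i with hY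
  have hYH : Yᴴ = Y := isHermitian_sum_smul (fun i ↦ (hE.posSemidef i).1) c
  have hvariance : ∑ i, (c i • 1 - Y) * E i * (c i • 1 - Y)ᴴ = ∑ i, c i ^ 2 • E i - Y ^ 2 := by
    have hterm (i : ι) : (c i • 1 - Y) * E i * (c i • 1 - Y)ᴴ
        = c i ^ 2 • E i - (c i • E i) * Y - Y * (c i • E i) + Y * E i * Y := by
      simp only [conjTranspose_sub, conjTranspose_smul, conjTranspose_one, hYH, star_trivial,
        sub_mul, mul_sub, Matrix.smul_mul, Matrix.mul_smul, one_mul, mul_one, smul_smul, sq]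
      abel
    simp only [hterm, Finset.sum_add_distrib, Finset.sum_sub_distrib, ← Finset.sum_mul,
      ← Finset.mul_sum, ← hY, hE.sum_eq_one]
    noncomm_ring
  have hpos : (∑ i, c i ^ 2 • E i - Y ^ 2).PosSemidef :=
    hvariance ▸ posSemidef_sum _ fun i _ ↦ (hE.posSemidef i).mul_mul_conjTranspose_same _
  have htrace := trace_mul_re_nonneg hρ hpos
  rw [mul_sub, trace_sub, Complex.sub_re, trace_mul_sum_smul_re] at htrace
  linarith

end POVM

section Variational

variable {ι κ α n : Type*} [Fintype n] {A B X : Matrix n n ℂ}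

/-- The weights `Tr (E i * F j)` of a pair of measurements `E` and `F`. For projections onto two
orthonormal bases these are the squared moduli of the inner products of the basis vectors. -/
noncomputable def overlap (E : ι → Matrix n n ℂ) (F : κ → Matrix n n ℂ) (x : ι × κ) : ℝ :=
  (E x.1 * F x.2).trace.re

lemma two_mul_trace_sub_trace_sq_le (hA : A.PosSemidef) (hB : B.PosSemidef) (hX : X.IsHermitian)
    {r s t : ℝ} (hr : 0 ≤ r) (hs : 0 ≤ s) (ht : 0 < t) :
    2 * (r * (A * X * B).trace.re) - (s + t * r) * (A * X * B * X).trace.re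
      ≤ (r * (A * B).trace.re) ^ 2 / (s * (A * B).trace.re + t * (r * (A * B).trace.re)) := by
  classical
  have hu : 0 ≤ s + t * r := by positivity
  rcases hu.eq_or_lt' with hu | hu
  · have hr₀ : r = 0 := by nlinarith
    simp [hr₀, show s = 0 by simpa [hr₀] using hu]
  set c : ℝ := r / (s + t * r) with hc
  have hsq : 0 ≤ (A * ((X - c • 1) * B * (X - c • 1)ᴴ)).trace.re :=
    trace_mul_re_nonneg hA (hB.mul_mul_conjTranspose_same _)
  have hcross : (A * B * X).trace.re = (A * X * B).trace.re := by
    rw [← Complex.conj_re, ← Complex.star_def, ← trace_conjTranspose, conjTranspose_mul,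
      conjTranspose_mul, hA.1, hB.1, hX,
      ← Matrix.mul_assoc, trace_mul_cycle]
  have hexpand : (A * ((X - c • 1) * B * (X - c • 1)ᴴ)).trace.re
      = (A * X * B * X).trace.re - 2 * c * (A * X * B).trace.re + c ^ 2 * (A * B).trace.re := by
    have : A * ((X - c • 1) * B * (X - c • 1)ᴴ)
        = A * X * B * X - c • (A * X * B) - c • (A * B * X) + c ^ 2 • (A * B) := by
      simp only [conjTranspose_sub, conjTranspose_smul, conjTranspose_one, hX.eq, star_trivial,
        sub_mul, mul_sub, Matrix.smul_mul, Matrix.mul_smul, one_mul, mul_one, smul_smul, sq,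
        Matrix.mul_assoc]
      abel
    rw [this]
    simp only [trace_add, trace_sub, trace_smul, Complex.add_re, Complex.sub_re, Complex.smul_re,
      smul_eq_mul, hcross]
    ring
  have hrhs : (r * (A * B).trace.re) ^ 2 / (s * (A * B).trace.re + t * (r * (A * B).trace.re))
      = (s + t * r) * (c ^ 2 * (A * B).trace.re) := by
    rcases eq_or_ne (A * B).trace.re 0 with hw | hw
    · simp [hw]
    · rw [hc]
      field_simp
  have hcr : (s + t * r) * c = r := by
    rw [hc]
    field_simp
  rw [hexpand] at hsq
  rw [hrhs]
  linear_combination (s + t * r) * hsq - 2 * (A * X * B).trace.re * hcr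

lemma IsPOVM.sum_overlap_right [DecidableEq n] [Fintype κ] {F : κ → Matrix n n ℂ} (hF : IsPOVM F)
    (E : ι → Matrix n n ℂ) (i : ι) : ∑ j, overlap E F (i, j) = (E i).trace.re := by
  simp only [overlap, ← Complex.re_sum, ← trace_sum, ← Finset.mul_sum, hF.sum_eq_one, mul_one]

variable [DecidableEq n] [Fintype ι] [Fintype κ] [Fintype α] {E : ι → Matrix n n ℂ}
  {F : κ → Matrix n n ℂ} {G : α → Matrix n n ℂ} {r : ι → ℝ} {s : κ → ℝ} {ρ σ : Matrix n n ℂ} {t : ℝ}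

lemma two_mul_trace_sub_trace_sq_le_sum_sq_div (hE : IsPOVM E) (hF : IsPOVM F)
    (hr : ∀ i, 0 ≤ r i) (hs : ∀ j, 0 ≤ s j) (hX : X.IsHermitian) (ht : 0 < t)
    (hρ : ∑ i, r i • E i = ρ) (hσ : ∑ j, s j • F j = σ) :
    2 * (ρ * X).trace.re - (σ * X ^ 2).trace.re - t * (ρ * X ^ 2).trace.re
      ≤ ∑ x : ι × κ, (r x.1 * overlap E F x) ^ 2
          / (s x.2 * overlap E F x + t * (r x.1 * overlap E F x)) := by
  have hρX : (ρ * X).trace.re = ∑ x : ι × κ, r x.1 * (E x.1 * X * F x.2).trace.re := by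
    simp only [Fintype.sum_prod_type, ← Finset.mul_sum, ← Complex.re_sum, ← trace_sum,
      hF.sum_eq_one, mul_one]
    simp [← hρ, Finset.sum_mul, trace_sum]
  have hρX₂ : (ρ * X ^ 2).trace.re
      = ∑ x : ι × κ, r x.1 * (E x.1 * X * F x.2 * X).trace.re := by
    simp only [Fintype.sum_prod_type, ← Finset.mul_sum, ← Complex.re_sum, ← trace_sum,
      ← Finset.sum_mul, hF.sum_eq_one, mul_one]
    simp [← hρ, Finset.sum_mul, trace_sum, sq, Matrix.mul_assoc]
  have hσX₂ : (σ * X ^ 2).trace.re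
      = ∑ x : ι × κ, s x.2 * (E x.1 * X * F x.2 * X).trace.re := by
    simp only [Fintype.sum_prod_type_right, ← Finset.mul_sum, ← Complex.re_sum, ← trace_sum,
      ← Finset.sum_mul, hE.sum_eq_one, one_mul]
    simp [← hσ, Finset.sum_mul, trace_sum, sq, ← Matrix.mul_assoc, trace_mul_cycle _ X X]
  rw [hρX, hρX₂, hσX₂, Finset.mul_sum, Finset.mul_sum, ← Finset.sum_sub_distrib,
    ← Finset.sum_sub_distrib]
  refine Finset.sum_le_sum fun x _ ↦ le_of_eq_of_le ?_ <| two_mul_trace_sub_trace_sq_le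
    (hE.posSemidef x.1) (hF.posSemidef x.2) hX (hr x.1) (hs x.2) ht
  ring

lemma IsPOVM.sum_sq_div_bornProb_le (hG : IsPOVM G) (hE : IsPOVM E) (hF : IsPOVM F)
    (hr : ∀ i, 0 ≤ r i) (hs : ∀ j, 0 ≤ s j) (ht : 0 < t) (hρ₀ : ρ.PosSemidef) (hσ₀ : σ.PosSemidef)
    (hρ : ∑ i, r i • E i = ρ) (hσ : ∑ j, s j • F j = σ) :
    ∑ k, bornProb G ρ k ^ 2 / (bornProb G σ k + t * bornProb G ρ k)
      ≤ ∑ x : ι × κ, (r x.1 * overlap E F x) ^ 2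
          / (s x.2 * overlap E F x + t * (r x.1 * overlap E F x)) := by
  set p := bornProb G ρ
  set q := bornProb G σ
  set c : α → ℝ := fun k ↦ p k / (q k + t * p k)
  have hoptimal (k : α) : p k ^ 2 / (q k + t * p k)
      = 2 * (c k * p k) - c k ^ 2 * q k - t * (c k ^ 2 * p k) := by
    rcases eq_or_ne (q k + t * p k) 0 with h | h
    · simp [c, h]
    · have hc : c k * (q k + t * p k) = p k := div_mul_cancel₀ _ h
      have hsq : p k ^ 2 / (q k + t * p k) = c k * p k := by
        simp only [c]
        ring
      linear_combination hsq + c k * hc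
  calc ∑ k, p k ^ 2 / (q k + t * p k)
      = 2 * ∑ k, c k * p k - ∑ k, c k ^ 2 * q k - t * ∑ k, c k ^ 2 * p k := by
        simp only [hoptimal, Finset.sum_sub_distrib, Finset.mul_sum]
    _ ≤ 2 * (ρ * ∑ k, c k • G k).trace.re - (σ * (∑ k, c k • G k) ^ 2).trace.re
          - t * (ρ * (∑ k, c k • G k) ^ 2).trace.re := by
        rw [trace_mul_sum_smul_re]
        gcongr
        · exact hG.trace_mul_sum_smul_sq_le hσ₀ c
        · exact hG.trace_mul_sum_smul_sq_le hρ₀ c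
    _ ≤ _ := two_mul_trace_sub_trace_sq_le_sum_sq_div hE hF hr hs
        (isHermitian_sum_smul (fun k ↦ (hG.posSemidef k).1) c) ht hρ hσ

end Variational

section SpectralResolution

variable {ι n : Type*}

/-- A decomposition `A = ∑ i, s i • E i` with Hermitian projections `E i` that are mutually
orthogonal and sum to `1`. The eigenvalues `s i` may repeat, and `E i` may have any rank. -/
structure IsSpectralResolution [Fintype ι] [Fintype n] [DecidableEq n] (A : Matrix n n ℂ)
    (s : ι → ℝ) (E : ι → Matrix n n ℂ) : Prop where
  posSemidef : ∀ i, (E i).PosSemidef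
  idempotents : CompleteOrthogonalIdempotents E
  sum_smul : ∑ i, s i • E i = A

namespace IsSpectralResolution

variable [Fintype ι] [Fintype n] [DecidableEq n] {A : Matrix n n ℂ} {s : ι → ℝ}
  {E : ι → Matrix n n ℂ}

lemma isPOVM (h : IsSpectralResolution A s E) : IsPOVM E :=
  ⟨h.posSemidef, h.idempotents.complete⟩

lemma isHermitian (h : IsSpectralResolution A s E) : A.IsHermitian :=
  h.sum_smul ▸ isHermitian_sum_smul (fun i ↦ (h.posSemidef i).1) s

lemma proj_mul (h : IsSpectralResolution A s E) (i : ι) : E i * A = s i • E i := by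
  classical
  simp [← h.sum_smul, Finset.mul_sum, h.idempotents.mul_eq]

lemma mul_proj (h : IsSpectralResolution A s E) (i : ι) : A * E i = s i • E i := by
  classical
  simp [← h.sum_smul, Finset.sum_mul, h.idempotents.mul_eq]

lemma bornProb_eq (h : IsSpectralResolution A s E) (i : ι) :
    bornProb E A i = s i * (E i).trace.re := by
  simp [bornProb, h.proj_mul]

lemma pow_mul_proj (h : IsSpectralResolution A s E) (k : ℕ) (i : ι) :
    A ^ k * E i = s i ^ k • E i := by
  induction k with
  | zero => simp
  | succ k ih =>
    rw [pow_succ, Matrix.mul_assoc, h.mul_proj, Matrix.mul_smul, ih, smul_smul, pow_succ']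

lemma aeval_eq (h : IsSpectralResolution A s E) (q : Polynomial ℝ) :
    Polynomial.aeval A q = ∑ i, q.eval (s i) • E i := by
  rw [← mul_one (Polynomial.aeval A q), ← h.idempotents.complete, Finset.mul_sum]
  refine Finset.sum_congr rfl fun i _ ↦ ?_
  simp only [Polynomial.aeval_eq_sum_range, Polynomial.eval_eq_sum_range, Finset.sum_mul,
    Finset.sum_smul, Matrix.smul_mul, h.pow_mul_proj, smul_smul]

lemma cfc_eq (h : IsSpectralResolution A s E) (f : ℝ → ℝ) : cfc f A = ∑ i, f (s i) • E i := by
  classical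
  set S : Finset ℝ := A.finite_real_spectrum.toFinset ∪ Finset.univ.image s
  set q := Lagrange.interpolate S id f
  have hq {x : ℝ} (hx : x ∈ S) : q.eval x = f x :=
    Lagrange.eval_interpolate_at_node f Function.injective_id.injOn hx
  have hspec : (spectrum ℝ A).EqOn f q.eval := fun x hx ↦ (hq (by simp [S, hx])).symm
  rw [cfc_congr hspec, cfc_polynomial q A h.isHermitian.isSelfAdjoint, h.aeval_eq]
  exact Finset.sum_congr rfl fun i _ ↦ by rw [hq (by simp [S])]

lemma trace_mul_cfc_re (h : IsSpectralResolution A s E) (ρ : Matrix n n ℂ) (f : ℝ → ℝ) :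
    (ρ * cfc f A).trace.re = ∑ i, bornProb E ρ i * f (s i) := by
  rw [h.cfc_eq, trace_mul_sum_smul_re]
  exact Finset.sum_congr rfl fun i _ ↦ mul_comm _ _

end IsSpectralResolution

variable [Fintype n] [DecidableEq n] {A : Matrix n n ℂ}

/-- The orthogonal projection onto the line spanned by the `i`-th vector of the eigenvector basis
of a Hermitian matrix. -/
noncomputable def eigenProj (hA : A.IsHermitian) (i : n) : Matrix n n ℂ :=
  Unitary.conjStarAlgAut ℂ _ hA.eigenvectorUnitary (diagonal (Pi.single i 1))

lemma isSpectralResolution_eigenProj (hA : A.IsHermitian) :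
    IsSpectralResolution A hA.eigenvalues (eigenProj hA) where
  posSemidef i := by
    rw [eigenProj, Unitary.conjStarAlgAut_apply]
    exact (PosSemidef.diagonal (Pi.single_nonneg.2 zero_le_one)).mul_mul_conjTranspose_same _
  idempotents := (CompleteOrthogonalIdempotents.single fun _ : n ↦ ℂ).map
    ((RingHomClass.toRingHom (Unitary.conjStarAlgAut ℂ _ hA.eigenvectorUnitary)).comp
      (diagonalRingHom n ℂ))
  sum_smul := by
    conv_rhs => rw [hA.spectral_theorem]
    simp only [eigenProj, ← Complex.coe_smul, ← map_smul, ← map_sum]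
    congr 1
    ext j k
    by_cases hjk : j = k
    · simp [hjk, Matrix.sum_apply, Pi.single_apply]
    · simp [hjk, Matrix.sum_apply]

lemma trace_eigenProj (hA : A.IsHermitian) (i : n) : (eigenProj hA i).trace = 1 := by
  rw [eigenProj, Unitary.conjStarAlgAut_apply, trace_mul_cycle, Unitary.coe_star_mul_self, one_mul,
    trace_diagonal]
  simp

lemma entropy_eq_neg_trace_mul_log (hA : A.IsHermitian) :
    entropy A = -(A * cfc log A).trace.re := by
  have h := isSpectralResolution_eigenProj hA
  rw [entropy, dif_pos hA, h.trace_mul_cfc_re, ← Finset.sum_neg_distrib]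
  simp [h.bornProb_eq, trace_eigenProj, negMulLog]

end SpectralResolution

section RelEntropy

variable {ι κ α n : Type*} [Fintype n] [DecidableEq n]

/-- The Umegaki relative entropy `Tr ρ (log ρ - log σ)`. As `Real.log 0 = 0`, it is the usual one
only if the kernel of `σ` is contained in that of `ρ`; otherwise the usual value is infinite. -/
noncomputable def quantumRelEntropy (ρ σ : Matrix n n ℂ) : ℝ :=
  (ρ * (cfc log ρ - cfc log σ)).trace.re

variable [Fintype ι] [Fintype κ] [Fintype α] {E : ι → Matrix n n ℂ} {F : κ → Matrix n n ℂ}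
  {G : α → Matrix n n ℂ} {r : ι → ℝ} {s : κ → ℝ} {ρ σ : Matrix n n ℂ}

namespace IsSpectralResolution

lemma eigenvalue_mul_overlap_eq_zero (hE : IsSpectralResolution ρ r E)
    (hF : IsSpectralResolution σ s F)
    (hker : LinearMap.ker σ.mulVecLin ≤ LinearMap.ker ρ.mulVecLin) {i : ι} {j : κ} (hj : s j = 0) :
    r i * overlap E F (i, j) = 0 := by
  have hσF : σ * F j = 0 := by rw [hF.mul_proj, hj, zero_smul]
  have hρF : ρ * F j = 0 := by
    refine ext_of_mulVec_single fun k ↦ ?_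
    rw [zero_mulVec, ← mulVec_mulVec]
    exact hker (by rw [LinearMap.mem_ker, mulVecLin_apply, mulVec_mulVec, hσF, zero_mulVec])
  calc r i * overlap E F (i, j) = (r i • E i * F j).trace.re := by simp [overlap]
    _ = 0 := by rw [← hE.proj_mul, Matrix.mul_assoc, hρF]; simp

lemma quantumRelEntropy_eq (hE : IsSpectralResolution ρ r E) (hF : IsSpectralResolution σ s F)
    (h : ∀ i j, s j = 0 → r i * overlap E F (i, j) = 0) :
    quantumRelEntropy ρ σ
      = relEntropy (fun x ↦ r x.1 * overlap E F x) (fun x ↦ s x.2 * overlap E F x) := by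
  have hterm (x : ι × κ) : r x.1 * overlap E F x
        * (log (r x.1 * overlap E F x) - log (s x.2 * overlap E F x))
      = r x.1 * overlap E F x * log (r x.1) - r x.1 * overlap E F x * log (s x.2) := by
    rcases eq_or_ne (r x.1 * overlap E F x) 0 with hx | hx
    · simp [hx]
    · rw [log_mul (left_ne_zero_of_mul hx) (right_ne_zero_of_mul hx),
        log_mul (fun hs ↦ hx (h x.1 x.2 hs)) (right_ne_zero_of_mul hx)]
      ring
  have hbornF (j : κ) : bornProb F ρ j = ∑ i, r i * overlap E F (i, j) := by
    rw [bornProb, ← hE.sum_smul, trace_mul_sum_smul_re]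
    simp only [bornProb, overlap]
  rw [quantumRelEntropy, mul_sub, trace_sub, Complex.sub_re, hE.trace_mul_cfc_re,
    hF.trace_mul_cfc_re, relEntropy]
  simp only [hterm, Finset.sum_sub_distrib]
  rw [Fintype.sum_prod_type, Fintype.sum_prod_type_right]
  simp only [← Finset.sum_mul, ← Finset.mul_sum, hF.isPOVM.sum_overlap_right, hE.bornProb_eq,
    hbornF]

end IsSpectralResolution

lemma IsPOVM.relEntropy_bornProb_le_quantumRelEntropy (hG : IsPOVM G) (hρ : ρ.PosSemidef)
    (hσ : σ.PosSemidef) (hker : LinearMap.ker σ.mulVecLin ≤ LinearMap.ker ρ.mulVecLin) :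
    relEntropy (bornProb G ρ) (bornProb G σ) ≤ quantumRelEntropy ρ σ := by
  have hE := isSpectralResolution_eigenProj hρ.1
  have hF := isSpectralResolution_eigenProj hσ.1
  set r := hρ.1.eigenvalues
  set s := hσ.1.eigenvalues
  set w := overlap (eigenProj hρ.1) (eigenProj hσ.1)
  have hr (i : n) : 0 ≤ r i := hρ.eigenvalues_nonneg i
  have hs (j : n) : 0 ≤ s j := hσ.eigenvalues_nonneg j
  have hw (x : n × n) : 0 ≤ w x := trace_mul_re_nonneg (hE.posSemidef x.1) (hF.posSemidef x.2)
  have hac (i j : n) (hj : s j = 0) : r i * w (i, j) = 0 :=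
    hE.eigenvalue_mul_overlap_eq_zero hF hker hj
  have hsum : ∑ k, bornProb G ρ k = ∑ x : n × n, r x.1 * w x := by
    rw [hG.sum_bornProb, ← hE.isPOVM.sum_bornProb, Fintype.sum_prod_type]
    simp only [hE.bornProb_eq, ← Finset.mul_sum, w, hF.isPOVM.sum_overlap_right]
  rw [hE.quantumRelEntropy_eq hF hac]
  refine relEntropy_le_relEntropy_of_sum_sq_div_le (hG.bornProb_nonneg hρ) (hG.bornProb_nonneg hσ)
    (fun x ↦ mul_nonneg (hr x.1) (hw x)) (fun x ↦ mul_nonneg (hs x.2) (hw x)) (fun x hx ↦ ?_) hsum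
    fun t ht ↦ hG.sum_sq_div_bornProb_le hE.isPOVM hF.isPOVM hr hs ht hρ hσ hE.sum_smul hF.sum_smul
  rcases mul_eq_zero.1 hx with hx | hx
  · exact hac x.1 x.2 hx
  · rw [hx, mul_zero]

end RelEntropy

section PartialTrace

variable {m n : Type*} {ρ : Matrix (m × n) (m × n) ℂ}

lemma ptraceSnd_posSemidef [Fintype n] (hρ : ρ.PosSemidef) : (ptraceSnd ρ).PosSemidef := by
  have : ptraceSnd ρ = ∑ a, ρ.submatrix (fun i ↦ (i, a)) (fun i ↦ (i, a)) := by
    ext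
    simp [ptraceSnd, Matrix.sum_apply]
  exact this ▸ posSemidef_sum _ fun a _ ↦ hρ.submatrix _

lemma ptraceFst_posSemidef [Fintype m] (hρ : ρ.PosSemidef) : (ptraceFst ρ).PosSemidef := by
  have : ptraceFst ρ = ∑ a, ρ.submatrix (fun i ↦ (a, i)) (fun i ↦ (a, i)) := by
    ext
    simp [ptraceFst, Matrix.sum_apply]
  exact this ▸ posSemidef_sum _ fun a _ ↦ hρ.submatrix _

variable [Fintype m] [Fintype n]

lemma trace_kronecker_one_mul [DecidableEq n] (A : Matrix m m ℂ) (ρ : Matrix (m × n) (m × n) ℂ) :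
    (A ⊗ₖ 1 * ρ).trace = (A * ptraceSnd ρ).trace := by
  simp only [trace, diag_apply, mul_apply, Fintype.sum_prod_type, kroneckerMap_apply, ptraceSnd,
    of_apply, one_apply, mul_ite, mul_one, mul_zero, ite_mul, zero_mul, Finset.sum_ite_eq,
    Finset.mem_univ, if_true, Finset.mul_sum]
  exact Finset.sum_congr rfl fun i _ ↦ Finset.sum_comm

lemma trace_one_kronecker_mul [DecidableEq m] (B : Matrix n n ℂ) (ρ : Matrix (m × n) (m × n) ℂ) :
    (1 ⊗ₖ B * ρ).trace = (B * ptraceFst ρ).trace := by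
  simp only [trace, diag_apply, mul_apply, Fintype.sum_prod_type, kroneckerMap_apply, ptraceFst,
    of_apply, one_apply, ite_mul, one_mul, zero_mul, Finset.sum_ite_irrel, Finset.sum_const_zero,
    Finset.sum_ite_eq, Finset.mem_univ, if_true, Finset.mul_sum]
  rw [Finset.sum_comm]
  exact Finset.sum_congr rfl fun i _ ↦ Finset.sum_comm

end PartialTrace

section Kronecker

variable {α β m n : Type*}

lemma kronecker_sum {R l p : Type*} [NonUnitalNonAssocSemiring R] (A : Matrix l m R) (s : Finset β)
    (Q : β → Matrix n p R) : A ⊗ₖ (∑ b ∈ s, Q b) = ∑ b ∈ s, A ⊗ₖ Q b := by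
  ext
  simp [Matrix.sum_apply, Finset.mul_sum]

lemma sum_kronecker {R l p : Type*} [NonUnitalNonAssocSemiring R] (s : Finset α)
    (P : α → Matrix l m R) (B : Matrix n p R) : (∑ a ∈ s, P a) ⊗ₖ B = ∑ a ∈ s, P a ⊗ₖ B := by
  ext
  simp [Matrix.sum_apply, Finset.sum_mul]

lemma sum_kronecker_sum {R l p : Type*} [NonUnitalNonAssocSemiring R] [Fintype α] [Fintype β]
    (P : α → Matrix l m R) (Q : β → Matrix n p R) :
    (∑ a, P a) ⊗ₖ (∑ b, Q b) = ∑ c : α × β, P c.1 ⊗ₖ Q c.2 := by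
  simp_rw [sum_kronecker, kronecker_sum, Fintype.sum_prod_type]

variable {P : α → Matrix m m ℂ} {Q : β → Matrix n n ℂ}

lemma IsPOVM.kronecker [Finite m] [Finite n] [DecidableEq m] [DecidableEq n] [Fintype α]
    [Fintype β] (hP : IsPOVM P) (hQ : IsPOVM Q) :
    IsPOVM fun c : α × β ↦ P c.1 ⊗ₖ Q c.2 where
  posSemidef c := (hP.posSemidef c.1).kronecker (hQ.posSemidef c.2)
  sum_eq_one := by rw [← sum_kronecker_sum, hP.sum_eq_one, hQ.sum_eq_one, one_kronecker_one]

variable [Fintype m] [Fintype n]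

lemma bornProb_kronecker {A : Matrix m m ℂ} (hA : A.IsHermitian) (B : Matrix n n ℂ) {c : α × β}
    (hP : (P c.1).IsHermitian) : bornProb (fun c : α × β ↦ P c.1 ⊗ₖ Q c.2) (A ⊗ₖ B) c
      = bornProb P A c.1 * bornProb Q B c.2 := by
  simp [bornProb, ← mul_kronecker_mul, trace_kronecker, trace_mul_im_eq_zero hP hA]

namespace IsPOVM

lemma sum_bornProb_kronecker_right [DecidableEq n] [Fintype β] (hQ : IsPOVM Q)
    (P : α → Matrix m m ℂ) (ρ : Matrix (m × n) (m × n) ℂ) (a : α) :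
    ∑ b, bornProb (fun c : α × β ↦ P c.1 ⊗ₖ Q c.2) ρ (a, b) = bornProb P (ptraceSnd ρ) a := by
  simp only [bornProb, ← Complex.re_sum, ← trace_sum, ← Finset.sum_mul, ← kronecker_sum,
    hQ.sum_eq_one, trace_kronecker_one_mul]

lemma sum_bornProb_kronecker_left [DecidableEq m] [Fintype α] (hP : IsPOVM P)
    (Q : β → Matrix n n ℂ) (ρ : Matrix (m × n) (m × n) ℂ) (b : β) :
    ∑ a, bornProb (fun c : α × β ↦ P c.1 ⊗ₖ Q c.2) ρ (a, b) = bornProb Q (ptraceFst ρ) b := by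
  simp only [bornProb, ← Complex.re_sum, ← trace_sum, ← Finset.sum_mul, ← sum_kronecker,
    hP.sum_eq_one, trace_one_kronecker_mul]

variable [DecidableEq m] [DecidableEq n] [Fintype α] [Fintype β] {ρ : Matrix (m × n) (m × n) ℂ}

lemma bornProb_kronecker_eq_zero_of_left (hP : IsPOVM P) (hQ : IsPOVM Q) (hρ : ρ.PosSemidef)
    {a : α} (ha : bornProb P (ptraceSnd ρ) a = 0) (b : β) :
    bornProb (fun c : α × β ↦ P c.1 ⊗ₖ Q c.2) ρ (a, b) = 0 :=
  congrFun ((Fintype.sum_eq_zero_iff_of_nonneg fun b ↦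
    (hP.kronecker hQ).bornProb_nonneg hρ (a, b)).1
      ((hQ.sum_bornProb_kronecker_right P ρ a).trans ha)) b

lemma bornProb_kronecker_eq_zero_of_right (hP : IsPOVM P) (hQ : IsPOVM Q) (hρ : ρ.PosSemidef)
    (a : α) {b : β} (hb : bornProb Q (ptraceFst ρ) b = 0) :
    bornProb (fun c : α × β ↦ P c.1 ⊗ₖ Q c.2) ρ (a, b) = 0 :=
  congrFun ((Fintype.sum_eq_zero_iff_of_nonneg fun a ↦
    (hP.kronecker hQ).bornProb_nonneg hρ (a, b)).1
      ((hP.sum_bornProb_kronecker_left Q ρ b).trans hb)) a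

end IsPOVM

lemma IsSpectralResolution.kronecker [DecidableEq m] [DecidableEq n] [Fintype α] [Fintype β]
    {A : Matrix m m ℂ} {B : Matrix n n ℂ} {x : α → ℝ} {y : β → ℝ}
    (hA : IsSpectralResolution A x P) (hB : IsSpectralResolution B y Q) :
    IsSpectralResolution (A ⊗ₖ B) (fun c : α × β ↦ x c.1 * y c.2) (fun c ↦ P c.1 ⊗ₖ Q c.2) where
  posSemidef := (hA.isPOVM.kronecker hB.isPOVM).posSemidef
  idempotents := by
    refine CompleteOrthogonalIdempotents.iff_ortho_complete.2
      ⟨fun c d hcd ↦ ?_, (hA.isPOVM.kronecker hB.isPOVM).sum_eq_one⟩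
    dsimp only
    rw [← mul_kronecker_mul]
    by_cases h : c.1 = d.1
    · rw [hB.idempotents.ortho fun h' ↦ hcd (Prod.ext h h'), kronecker_zero]
    · rw [hA.idempotents.ortho h, zero_kronecker]
  sum_smul := by
    rw [← hA.sum_smul, ← hB.sum_smul, sum_kronecker_sum]
    simp only [kronecker_smul, smul_kronecker, smul_smul, mul_comm]

variable {ρ : Matrix (m × n) (m × n) ℂ}

lemma ker_ptraceSnd_kronecker_ptraceFst_le (hρ : ρ.PosSemidef) :
    LinearMap.ker (ptraceSnd ρ ⊗ₖ ptraceFst ρ).mulVecLin ≤ LinearMap.ker ρ.mulVecLin := by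
  classical
  have hA := isSpectralResolution_eigenProj (ptraceSnd_posSemidef hρ).1
  have hB := isSpectralResolution_eigenProj (ptraceFst_posSemidef hρ).1
  have hAB := hA.kronecker hB
  intro v hv
  rw [LinearMap.mem_ker, mulVecLin_apply] at hv ⊢
  rw [← one_mulVec v, ← hAB.idempotents.complete, Matrix.sum_mulVec, mulVec_sum]
  refine Finset.sum_eq_zero fun c _ ↦ ?_
  by_cases hc : (ptraceSnd_posSemidef hρ).1.eigenvalues c.1
      * (ptraceFst_posSemidef hρ).1.eigenvalues c.2 = 0
  · have hprob : (eigenProj (ptraceSnd_posSemidef hρ).1 c.1 ⊗ₖ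
        eigenProj (ptraceFst_posSemidef hρ).1 c.2 * ρ).trace.re = 0 := by
      rcases mul_eq_zero.1 hc with h | h
      · exact hA.isPOVM.bornProb_kronecker_eq_zero_of_left hB.isPOVM hρ
          (by rw [hA.bornProb_eq, h, zero_mul]) c.2
      · exact hA.isPOVM.bornProb_kronecker_eq_zero_of_right hB.isPOVM hρ c.1
          (by rw [hB.bornProb_eq, h, zero_mul])
    rw [mulVec_mulVec, mul_eq_zero_of_trace_mul_re_eq_zero (hAB.posSemidef c).1
      (hAB.idempotents.idem c) hρ hprob, zero_mulVec]
  · have hproj := congr_arg (· *ᵥ v) (hAB.proj_mul c)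
    simp only [← mulVec_mulVec, hv, mulVec_zero, smul_mulVec] at hproj
    rw [(smul_eq_zero.1 hproj.symm).resolve_left hc, mulVec_zero]

variable [DecidableEq m] [DecidableEq n]

lemma trace_mul_log_ptraceSnd_kronecker_ptraceFst (hρ : ρ.PosSemidef) :
    (ρ * cfc log (ptraceSnd ρ ⊗ₖ ptraceFst ρ)).trace.re
      = (ptraceSnd ρ * cfc log (ptraceSnd ρ)).trace.re
        + (ptraceFst ρ * cfc log (ptraceFst ρ)).trace.re := by
  have hA := isSpectralResolution_eigenProj (ptraceSnd_posSemidef hρ).1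
  have hB := isSpectralResolution_eigenProj (ptraceFst_posSemidef hρ).1
  rw [(hA.kronecker hB).trace_mul_cfc_re, hA.trace_mul_cfc_re, hB.trace_mul_cfc_re,
    sum_mul_log_mul]
  · simp only [hB.isPOVM.sum_bornProb_kronecker_right, hA.isPOVM.sum_bornProb_kronecker_left]
  · exact fun a b ha ↦ hA.isPOVM.bornProb_kronecker_eq_zero_of_left hB.isPOVM hρ
      (by rw [hA.bornProb_eq, ha, zero_mul]) b
  · exact fun a b hb ↦ hA.isPOVM.bornProb_kronecker_eq_zero_of_right hB.isPOVM hρ a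
      (by rw [hB.bornProb_eq, hb, zero_mul])

lemma quantumRelEntropy_ptraceSnd_kronecker_ptraceFst (hρ : ρ.PosSemidef) :
    quantumRelEntropy ρ (ptraceSnd ρ ⊗ₖ ptraceFst ρ)
      = entropy (ptraceSnd ρ) + entropy (ptraceFst ρ) - entropy ρ := by
  rw [quantumRelEntropy, mul_sub, trace_sub, Complex.sub_re,
    trace_mul_log_ptraceSnd_kronecker_ptraceFst hρ, entropy_eq_neg_trace_mul_log hρ.1,
    entropy_eq_neg_trace_mul_log (ptraceSnd_posSemidef hρ).1,
    entropy_eq_neg_trace_mul_log (ptraceFst_posSemidef hρ).1]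
  ring

end Kronecker

theorem quantum_mutual_info_ge_classical_mutual_info_general
    {m n α β : Type*} [Fintype m] [Fintype n] [DecidableEq m] [DecidableEq n]
    [Fintype α] [Fintype β] {ρ : Matrix (m × n) (m × n) ℂ} (hρ : ρ.PosSemidef)
    {P : α → Matrix m m ℂ} (hP : IsPOVM P) {Q : β → Matrix n n ℂ} (hQ : IsPOVM Q) :
    ∑ a, negMulLog (bornProb P (ptraceSnd ρ) a) + ∑ b, negMulLog (bornProb Q (ptraceFst ρ) b)
        - ∑ a, ∑ b, negMulLog (bornProb (fun c : α × β ↦ P c.1 ⊗ₖ Q c.2) ρ (a, b))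
      ≤ entropy (ptraceSnd ρ) + entropy (ptraceFst ρ) - entropy ρ := by
  have hρ₁ := ptraceSnd_posSemidef hρ
  have hρ₂ := ptraceFst_posSemidef hρ
  have hPQ := hP.kronecker hQ
  rw [← quantumRelEntropy_ptraceSnd_kronecker_ptraceFst hρ,
    ← relEntropy_mul_eq_sum_negMulLog (hPQ.bornProb_nonneg hρ)
      (hQ.sum_bornProb_kronecker_right P ρ) (hP.sum_bornProb_kronecker_left Q ρ)]
  simp only [← bornProb_kronecker hρ₁.1 _ (hP.posSemidef _).1]
  exact hPQ.relEntropy_bornProb_le_quantumRelEntropy hρ (hρ₁.kronecker hρ₂)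
    (ker_ptraceSnd_kronecker_ptraceFst_le hρ)

/-- **Quantum mutual information bounds classical mutual information**
(Corollary 5): `S[ρ₁] + S[ρ₂] − S[ρ₁₂] ≥ S^cl[ρ₁] + S^cl[ρ₂] − S^cl[ρ₁₂]`. -/
theorem quantum_mutual_info_ge_classical_mutual_info
    {n₁ n₂ : Type*} [Fintype n₁] [Fintype n₂]
    [DecidableEq n₁] [DecidableEq n₂] {M N : ℕ}
    (ρ : Matrix (n₁ × n₂) (n₁ × n₂) ℂ)
    (hρ : ρ.PosSemidef) (hρtr : ρ.trace = 1)
    (P : Fin M → Matrix n₁ n₁ ℂ) (hP : ∀ α, (P α).PosSemidef)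
    (hPsum : ∑ α, P α = 1)
    (Q : Fin N → Matrix n₂ n₂ ℂ) (hQ : ∀ β, (Q β).PosSemidef)
    (hQsum : ∑ β, Q β = 1) :
    (∑ α, Real.negMulLog (((P α * ptraceSnd ρ).trace).re))
      + (∑ β, Real.negMulLog (((Q β * ptraceFst ρ).trace).re))
      - (∑ α, ∑ β, Real.negMulLog ((((P α ⊗ₖ Q β) * ρ).trace).re))
    ≤ entropy (ptraceSnd ρ) + entropy (ptraceFst ρ) - entropy ρ :=
  quantum_mutual_info_ge_classical_mutual_info_general hρ ⟨hP, hPsum⟩ ⟨hQ, hQsum⟩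
end

section
/- If a partition of unity has small traces, the classical entropy dominates the quantum entropy: Let ρ be a density matrix on a finite-dimensional complex Hilbert space H and let P^1,…,P^M be positive semidefinite operators on H with ∑_{α=1}^M P^α = id_H and Tr P^α ≤ 1 for every α. Then S[ρ] ≤ S^cl[ρ], where S^cl[ρ] = ∑_α φ( Tr[P^α ρ] ) with φ(x) = −x ln x (and φ(0)=0). -/
/-!
In an eigenbasis `b` of `ρ` with eigenvalues `μ`, the numbers `⟪b i, P α (b i)⟫` are nonnegative,
sum to one over `α` because `P` is a partition of unity, and sum over `i` to `Tr (P α) ≤ 1`, while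
`Tr (P α ρ)` is the sum of the `μ i` weighted by them. A concave `f` with `0 ≤ f 0` satisfies
Jensen's inequality for weights of sum at most one, the missing mass being put at `0`; applying this
for each `α` and summing over `α` gives `∑ i, f (μ i) ≤ ∑ α, f (Tr (P α ρ))`.
-/

open Matrix Kronecker Real
open scoped ComplexOrder

theorem sum_smul_map_le_map_sum_smul_of_sum_le_one {𝕜 E β ι : Type*}
    [Field 𝕜] [LinearOrder 𝕜] [IsStrictOrderedRing 𝕜] [AddCommGroup E] [Module 𝕜 E]
    [AddCommGroup β] [PartialOrder β] [IsOrderedAddMonoid β] [Module 𝕜 β]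
    [IsStrictOrderedModule 𝕜 β]
    {s : Set E} {f : E → β} (hf : ConcaveOn 𝕜 s f) (h0s : 0 ∈ s) (hf0 : 0 ≤ f 0)
    {t : Finset ι} {w : ι → 𝕜} {p : ι → E} (hw : ∀ i ∈ t, 0 ≤ w i) (hw1 : ∑ i ∈ t, w i ≤ 1)
    (hp : ∀ i ∈ t, p i ∈ s) :
    ∑ i ∈ t, w i • f (p i) ≤ f (∑ i ∈ t, w i • p i) := by
  have slack_nonneg : 0 ≤ 1 - ∑ i ∈ t, w i := sub_nonneg.mpr hw1
  calc ∑ i ∈ t, w i • f (p i)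
      ≤ (1 - ∑ i ∈ t, w i) • f 0 + ∑ i ∈ t, w i • f (p i) :=
        le_add_of_nonneg_left (smul_nonneg slack_nonneg hf0)
    _ ≤ f ((1 - ∑ i ∈ t, w i) • 0 + ∑ i ∈ t, w i • p i) :=
        hf.map_add_sum_le hw (sub_add_cancel _ _) hp slack_nonneg h0s
    _ = f (∑ i ∈ t, w i • p i) := by rw [smul_zero, zero_add]

section Operators

variable {𝕜 E n ι : Type*} [RCLike 𝕜] [NormedAddCommGroup E] [InnerProductSpace 𝕜 E]
  [Fintype n] [Fintype ι]

theorem trace_mul_eq_sum_eigenvalue_mul_inner (b : OrthonormalBasis n 𝕜 E) {A : Module.End 𝕜 E}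
    {μ : n → 𝕜} (hA : ∀ i, A (b i) = μ i • b i) (T : Module.End 𝕜 E) :
    LinearMap.trace 𝕜 E (T * A) = ∑ i, μ i * inner 𝕜 (b i) (T (b i)) := by
  simp only [LinearMap.trace_eq_sum_inner _ b, Module.End.mul_apply, hA, map_smul, inner_smul_right]

theorem sum_inner_apply_self_eq_one {P : ι → Module.End 𝕜 E} (hP : ∑ α, P α = 1) {v : E}
    (hv : ‖v‖ = 1) : ∑ α, inner 𝕜 v (P α v) = 1 := by
  rw [← inner_sum, ← LinearMap.sum_apply, hP, Module.End.one_apply, inner_self_eq_norm_sq_to_K, hv,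
    RCLike.ofReal_one, one_pow]

theorem sum_map_le_sum_map_re_trace_mul_of_eigenbasis {s : Set ℝ} {f : ℝ → ℝ} (hf : ConcaveOn ℝ s f)
    (h0s : 0 ∈ s) (hf0 : 0 ≤ f 0) (b : OrthonormalBasis n 𝕜 E) {A : Module.End 𝕜 E} {μ : n → ℝ}
    (hA : ∀ i, A (b i) = (μ i : 𝕜) • b i) (hμ : ∀ i, μ i ∈ s) {P : ι → Module.End 𝕜 E}
    (hP : ∀ α, (P α).IsPositive) (hP_sum : ∑ α, P α = 1)
    (hP_trace : ∀ α, RCLike.re (LinearMap.trace 𝕜 E (P α)) ≤ 1) :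
    ∑ i, f (μ i) ≤ ∑ α, f (RCLike.re (LinearMap.trace 𝕜 E (P α * A))) := by
  let w (α : ι) (i : n) : ℝ := RCLike.re (inner 𝕜 (b i) (P α (b i)))
  have w_nonneg (α i) : 0 ≤ w α i := (hP α).re_inner_nonneg_right (b i)
  have sum_index_w (i) : ∑ α, w α i = 1 := by
    rw [← map_sum, sum_inner_apply_self_eq_one hP_sum (b.norm_eq_one i), RCLike.one_re]
  have sum_basis_w_le (α) : ∑ i, w α i ≤ 1 := by
    rw [← map_sum, ← LinearMap.trace_eq_sum_inner]
    exact hP_trace α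
  have re_trace_mul (α) : RCLike.re (LinearMap.trace 𝕜 E (P α * A)) = ∑ i, w α i • μ i := by
    rw [trace_mul_eq_sum_eigenvalue_mul_inner b hA, map_sum]
    exact Finset.sum_congr rfl fun i _ ↦ by rw [RCLike.re_ofReal_mul, smul_eq_mul, mul_comm]
  calc ∑ i, f (μ i)
      = ∑ i, ∑ α, w α i • f (μ i) := by simp only [← Finset.sum_smul, sum_index_w, one_smul]
    _ = ∑ α, ∑ i, w α i • f (μ i) := Finset.sum_comm
    _ ≤ ∑ α, f (∑ i, w α i • μ i) := Finset.sum_le_sum fun α _ ↦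
        sum_smul_map_le_map_sum_smul_of_sum_le_one hf h0s hf0 (fun i _ ↦ w_nonneg α i)
          (sum_basis_w_le α) fun i _ ↦ hμ i
    _ = ∑ α, f (RCLike.re (LinearMap.trace 𝕜 E (P α * A))) := by simp only [re_trace_mul]

end Operators

section Matrices

variable {𝕜 n ι : Type*} [RCLike 𝕜] [Fintype n] [DecidableEq n] [Fintype ι]

theorem trace_toLpLin {R : Type*} [CommRing R] (p : ENNReal) (A : Matrix n n R) :
    LinearMap.trace R (WithLp p (n → R)) (toLpLin p p A) = A.trace := by
  rw [toLpLin_eq_toLin, Matrix.trace_toLin_eq]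

theorem toEuclideanLin_eigenvectorBasis {A : Matrix n n 𝕜} (hA : A.IsHermitian) (i : n) :
    toEuclideanLin A (hA.eigenvectorBasis i) =
      (hA.eigenvalues i : 𝕜) • hA.eigenvectorBasis i := by
  ext j
  simp [hA.mulVec_eigenvectorBasis, RCLike.real_smul_eq_coe_mul]

theorem sum_map_eigenvalues_le_sum_map_re_trace_mul {s : Set ℝ} {f : ℝ → ℝ} (hf : ConcaveOn ℝ s f)
    (h0s : 0 ∈ s) (hf0 : 0 ≤ f 0) {A : Matrix n n 𝕜} (hA : A.IsHermitian)
    (hA_mem : ∀ i, hA.eigenvalues i ∈ s) {P : ι → Matrix n n 𝕜} (hP : ∀ α, (P α).PosSemidef)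
    (hP_sum : ∑ α, P α = 1) (hP_trace : ∀ α, RCLike.re (P α).trace ≤ 1) :
    ∑ i, f (hA.eigenvalues i) ≤ ∑ α, f (RCLike.re (P α * A).trace) := by
  have sum_toEuclideanLin : ∑ α, toEuclideanLin (P α) = 1 := by
    rw [← map_sum, hP_sum]
    exact toLpLin_one 2
  have trace_mul (α) : LinearMap.trace 𝕜 (EuclideanSpace 𝕜 n)
      (toEuclideanLin (P α) * toEuclideanLin A) = (P α * A).trace := by
    rw [← trace_toLpLin 2, toLpLin_mul_same, Module.End.mul_eq_comp]
  simpa only [trace_mul] using sum_map_le_sum_map_re_trace_mul_of_eigenbasis hf h0s hf0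
    hA.eigenvectorBasis (toEuclideanLin_eigenvectorBasis hA) hA_mem
    (fun α ↦ isPositive_toEuclideanLin_iff.mpr (hP α)) sum_toEuclideanLin
    fun α ↦ (trace_toLpLin 2 (P α)).symm ▸ hP_trace α

end Matrices

theorem entropy_le_classical_entropy_of_trace_le_one_general
    {n ι : Type*} [Fintype n] [DecidableEq n] [Fintype ι]
    {ρ : Matrix n n ℂ} (hρ : ρ.PosSemidef)
    {P : ι → Matrix n n ℂ} (hP : ∀ α, (P α).PosSemidef)
    (hPsum : ∑ α, P α = 1) (hPtr : ∀ α, (P α).trace.re ≤ 1) :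
    entropy ρ ≤ ∑ α, Real.negMulLog (P α * ρ).trace.re := by
  rw [entropy, dif_pos hρ.isHermitian]
  exact sum_map_eigenvalues_le_sum_map_re_trace_mul Real.concaveOn_negMulLog Set.self_mem_Ici
    Real.negMulLog_zero.ge hρ.isHermitian hρ.eigenvalues_nonneg hP hPsum hPtr

/-- If each member of a partition of unity has trace at most one, then the
classical entropy dominates the quantum entropy: `S[ρ] ≤ S^cl[ρ]`. -/
theorem entropy_le_classical_entropy_of_trace_le_one
    {n : Type*} [Fintype n] [DecidableEq n] {M : ℕ}
    (ρ : Matrix n n ℂ) (hρ : ρ.PosSemidef) (hρtr : ρ.trace = 1)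
    (P : Fin M → Matrix n n ℂ) (hP : ∀ α, (P α).PosSemidef)
    (hPsum : ∑ α, P α = 1)
    (hPtr : ∀ α, ((P α).trace).re ≤ 1) :
    entropy ρ ≤ ∑ α, Real.negMulLog (((P α * ρ).trace).re) :=
  entropy_le_classical_entropy_of_trace_le_one_general hρ hP hPsum hPtr
end
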